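/- For a > 1 and i ≥ 1 an integer, at any y in (1/a, 1) satisfying 2a²y³ + i(a²-1)y² - 2y - i = 0, the quantity 1 + (a/(y(1-y²)))·(dy/da) equals (1 + y²(3a²y² - 1 - a²) + iy(1 - y² + a²y²)) / (-(1-y²)(iy(a²-1) + 3a²y² - 1)), and this quantity is negative. -/

import Mathlib

theorem stmt_18 (i : ℕ) (hi : 1 ≤ i) (a y : ℝ) (ha : 1 < a)
    (hy₁ : 1 / a < y) (hy₂ : y < 1)
    (hroot : 2 * a ^ 2 * y ^ 3 + i * (a ^ 2 - 1) * y ^ 2 - 2 * y - i = 0) :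
    1 + (a / (y * (1 - y ^ 2))) *
        (-a * y ^ 2 * (i + 2 * y) / (i * y * (a ^ 2 - 1) + 3 * a ^ 2 * y ^ 2 - 1)) =
      (1 + y ^ 2 * (3 * a ^ 2 * y ^ 2 - 1 - a ^ 2) + i * y * (1 - y ^ 2 + a ^ 2 * y ^ 2)) /
        (-((1 - y ^ 2) * (i * y * (a ^ 2 - 1) + 3 * a ^ 2 * y ^ 2 - 1))) ∧
    1 + (a / (y * (1 - y ^ 2))) *
        (-a * y ^ 2 * (i + 2 * y) / (i * y * (a ^ 2 - 1) + 3 * a ^ 2 * y ^ 2 - 1)) < 0 := by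
  have ha0 : 0 < a := by linarith
  have hy0 : 0 < y := lt_trans (by positivity) hy₁
  have hi' : (1 : ℝ) ≤ i := by exact_mod_cast hi
  have hay : 1 < y * a := (div_lt_iff₀ ha0).1 hy₁
  have hs : 1 < a ^ 2 * y ^ 2 := by nlinarith
  have hz : 0 < 1 - y ^ 2 := by nlinarith
  have ha2 : 0 < a ^ 2 - 1 := by nlinarith
  have hiy : 0 < (i : ℝ) * y := by positivity
  have hD : 0 < i * y * (a ^ 2 - 1) + 3 * a ^ 2 * y ^ 2 - 1 := by
    have := mul_pos hiy ha2
    nlinarith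
  have hs2 : a ^ 2 * y ^ 2 < 1 + y ^ 2 := by
    by_contra! h
    have h1 : 0 < y * (a ^ 2 * y ^ 2 - 1) := mul_pos hy0 (by linarith)
    have h2 : 0 ≤ (i : ℝ) * (a ^ 2 * y ^ 2 - 1 - y ^ 2) :=
      mul_nonneg (by linarith) (by linarith)
    nlinarith
  have hN : 0 < 1 + y ^ 2 * (3 * a ^ 2 * y ^ 2 - 1 - a ^ 2)
      + i * y * (1 - y ^ 2 + a ^ 2 * y ^ 2) := by
    have h1 : 0 < (i : ℝ) * y * (1 - y ^ 2 + a ^ 2 * y ^ 2) := mul_pos hiy (by linarith)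
    have h2 : 0 < y ^ 2 * (a ^ 2 * y ^ 2 - 1) := mul_pos (by positivity) (by linarith)
    nlinarith [sq_nonneg y]
  have key : 1 + (a / (y * (1 - y ^ 2))) *
        (-a * y ^ 2 * (i + 2 * y) / (i * y * (a ^ 2 - 1) + 3 * a ^ 2 * y ^ 2 - 1)) =
      (1 + y ^ 2 * (3 * a ^ 2 * y ^ 2 - 1 - a ^ 2) + i * y * (1 - y ^ 2 + a ^ 2 * y ^ 2)) /
        (-((1 - y ^ 2) * (i * y * (a ^ 2 - 1) + 3 * a ^ 2 * y ^ 2 - 1))) := by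
    have e : -a * y ^ 2 * (i + 2 * y) = y * (-a * y * (i + 2 * y)) := by ring
    generalize hd : i * y * (a ^ 2 - 1) + 3 * a ^ 2 * y ^ 2 - 1 = D at *
    generalize hw : 1 - y ^ 2 = w at *
    have hw0 := hz.ne'
    have hD0 := hD.ne'
    have hy0' := hy0.ne'
    rw [eq_div_iff (by simp [hw0, hD0])]
    field_simp
    subst hw
    subst hd
    ring
  refine ⟨key, ?_⟩
  rw [key]
  exact div_neg_of_pos_of_neg hN (neg_neg_of_pos (mul_pos hz hD))
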